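/- For all nonnegative integers i, j, k with i + j + k ≥ 1 there exist constants C(i,j,k) > 0 and ε(i,j,k) ∈ (0,1) such that: for all λ_A, λ_B > 1 and all θ ∈ (0, π/2) with (π/2 − θ)⁻¹ ≤ ε(i,j,k)·λ_B², the function ψ(λ_A, λ_B, θ) = −(1/2)(π/2 − arctan(a′·cot θ − b′·tan θ)) satisfies |∂^{i+j+k} ψ / (∂θ^i ∂λ_A^j ∂λ_B^k)| ≤ C(i,j,k)·(π/2 − θ)^{−i−1}·λ_A^{−j}·λ_B^{−2−k}. -/

import Mathlib

open Real

/-- a′ = (λ_A²λ_B² − λ_A⁻²λ_B⁻²)/(2(λ_A² − λ_A⁻²)). -/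
noncomputable def aCoef' (lA lB : ℝ) : ℝ :=
  (lA ^ 2 * lB ^ 2 - lA⁻¹ ^ 2 * lB⁻¹ ^ 2) / (2 * (lA ^ 2 - lA⁻¹ ^ 2))

/-- b′ = (λ_A²λ_B⁻² − λ_A⁻²λ_B²)/(2(λ_A² − λ_A⁻²)). -/
noncomputable def bCoef' (lA lB : ℝ) : ℝ :=
  (lA ^ 2 * lB⁻¹ ^ 2 - lA⁻¹ ^ 2 * lB ^ 2) / (2 * (lA ^ 2 - lA⁻¹ ^ 2))

/-- ψ(λ_A, λ_B, θ) = −(1/2)(π/2 − arctan(a′·cot θ − b′·tan θ)) on θ ∈ (0, π/2). -/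
noncomputable def psiS (lA lB θ : ℝ) : ℝ :=
  -(1 / 2) * (π / 2 - Real.arctan (aCoef' lA lB * Real.cot θ - bCoef' lA lB * Real.tan θ))

namespace PsiBound

/-- The scale of each coordinate direction. -/
noncomputable def rho (m : Fin 3) (x : Fin 3 → ℝ) : ℝ :=
  ![x 0, x 1, π / 2 - x 2] m

/-- The region where estimates hold, coordinates `(λ_A, λ_B, θ)`. -/
def Om : Set (Fin 3 → ℝ) :=
  {x | 1 < x 0 ∧ 1 < x 1 ∧ 0 < x 2 ∧ x 2 < π / 2 ∧ 4 < x 1 ^ 2 * (π / 2 - x 2)}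

lemma isOpen_Om : IsOpen Om := by
  unfold Om
  simp only [Set.ofPred_and]
  refine IsOpen.inter ?_ (IsOpen.inter ?_ (IsOpen.inter ?_ (IsOpen.inter ?_ ?_))) <;>
    apply isOpen_lt <;> fun_prop

lemma rho_pos {x : Fin 3 → ℝ} (hx : x ∈ Om) (m : Fin 3) : 0 < rho m x := by
  obtain ⟨h0, h1, h2, h3, h4⟩ := hx
  fin_cases m <;> simp [rho] <;> linarith

lemma ev_Om {x : Fin 3 → ℝ} (hx : x ∈ Om) (m : Fin 3) :
    ∀ᶠ y in nhds (x m), Function.update x m y ∈ Om := by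
  have hc : Continuous (fun y : ℝ => Function.update x m y) := by fun_prop
  have : Function.update x m (x m) ∈ Om := by simpa using hx
  exact hc.continuousAt.eventually (isOpen_Om.mem_nhds this)

/-- Symbol class of order `n` and weight `w`. -/
def Sym : ℕ → ((Fin 3 → ℝ) → ℝ) → ((Fin 3 → ℝ) → ℝ) → Prop
  | 0, w, f => ∃ C : ℝ, 0 ≤ C ∧ ∀ x ∈ Om, |f x| ≤ C * w x
  | n + 1, w, f => (∃ C : ℝ, 0 ≤ C ∧ ∀ x ∈ Om, |f x| ≤ C * w x) ∧
      ∃ g : Fin 3 → (Fin 3 → ℝ) → ℝ,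
        (∀ m, ∀ x ∈ Om, HasDerivAt (fun y => f (Function.update x m y)) (g m x / rho m x) (x m)) ∧
        ∀ m, Sym n w (g m)

lemma Sym.bd {n w f} (h : Sym n w f) : ∃ C : ℝ, 0 ≤ C ∧ ∀ x ∈ Om, |f x| ≤ C * w x := by
  cases n with
  | zero => exact h
  | succ n => exact h.1

lemma Sym.down {n w f} (h : Sym (n + 1) w f) : Sym n w f := by
  induction n generalizing f with
  | zero => exact h.1
  | succ n ih =>
    obtain ⟨hb, g, hg, hs⟩ := h
    exact ⟨hb, g, hg, fun m => ih (hs m)⟩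

lemma Sym.mono {n w w' f} (h : Sym n w f) (K : ℝ) (hK : 0 ≤ K) (hw : ∀ x ∈ Om, w x ≤ K * w' x) :
    Sym n w' f := by
  have key : ∀ f : (Fin 3 → ℝ) → ℝ, (∃ C : ℝ, 0 ≤ C ∧ ∀ x ∈ Om, |f x| ≤ C * w x) →
      ∃ C : ℝ, 0 ≤ C ∧ ∀ x ∈ Om, |f x| ≤ C * w' x := by
    rintro f ⟨C, hC, h⟩
    refine ⟨C * K, by positivity, fun x hx => (h x hx).trans ?_⟩
    rw [mul_assoc]
    exact mul_le_mul_of_nonneg_left (hw x hx) hC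
  induction n generalizing f with
  | zero => exact key f h
  | succ n ih =>
    obtain ⟨hb, g, hg, hs⟩ := h
    exact ⟨key f hb, g, hg, fun m => ih (hs m)⟩

lemma Sym.add {n w f g} (hf : Sym n w f) (hg : Sym n w g) : Sym n w (fun x => f x + g x) := by
  have key : ∃ C : ℝ, 0 ≤ C ∧ ∀ x ∈ Om, |f x + g x| ≤ C * w x := by
    obtain ⟨C, hC, h⟩ := hf.bd
    obtain ⟨C', hC', h'⟩ := hg.bd
    refine ⟨C + C', by positivity, fun x hx => (abs_add_le _ _).trans ?_⟩
    linarith [h x hx, h' x hx]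
  induction n generalizing f g with
  | zero => exact key
  | succ n ih =>
    obtain ⟨hb, f', hf', hs⟩ := hf
    obtain ⟨hb2, g', hg', hs2⟩ := hg
    refine ⟨key, fun m x => f' m x + g' m x, fun m x hx => ?_, fun m => ih (hs m) (hs2 m) ?_⟩
    · rw [add_div]
      exact (hf' m x hx).add (hg' m x hx)
    · obtain ⟨C, hC, h⟩ := (hs m).bd
      obtain ⟨C', hC', h'⟩ := (hs2 m).bd
      refine ⟨C + C', by positivity, fun x hx => (abs_add_le _ _).trans ?_⟩
      linarith [h x hx, h' x hx]

lemma Sym.mul {n w v f g} (hf : Sym n w f) (hg : Sym n v g) :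
    Sym n (fun x => w x * v x) (fun x => f x * g x) := by
  induction n generalizing f g with
  | zero =>
    obtain ⟨C, hC, h⟩ := hf
    obtain ⟨C', hC', h'⟩ := hg
    refine ⟨C * C', by positivity, fun x hx => ?_⟩
    rw [abs_mul, mul_mul_mul_comm]
    exact mul_le_mul (h x hx) (h' x hx) (abs_nonneg _) ((abs_nonneg _).trans (h x hx))
  | succ n ih =>
    have hf0 := hf.down
    have hg0 := hg.down
    have hb := (ih hf0 hg0).bd
    obtain ⟨-, f', hf', hs⟩ := hf
    obtain ⟨-, g', hg', hs2⟩ := hg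
    refine ⟨hb, fun m x => f' m x * g x + f x * g' m x, fun m x hx => ?_,
      fun m => (ih (hs m) hg0).add (ih hf0 (hs2 m))⟩
    have := (hf' m x hx).mul (hg' m x hx)
    simp only [Function.update_eq_self] at this
    refine this.congr_deriv ?_
    ring

lemma Sym.const (n : ℕ) (c : ℝ) : Sym n (fun _ => 1) (fun _ => c) := by
  induction n generalizing c with
  | zero => exact ⟨|c|, abs_nonneg _, fun x _ => by simp⟩
  | succ n ih =>
    refine ⟨⟨|c|, abs_nonneg _, fun x _ => by simp⟩, fun _ _ => 0, fun m x _ => ?_, fun m => ih 0⟩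
    simpa using hasDerivAt_const (x m) c

lemma Sym.cmul {n w f} (c : ℝ) (hf : Sym n w f) : Sym n w (fun x => c * f x) := by
  refine ((Sym.const n c).mul hf).mono 1 zero_le_one fun x _ => by simp

lemma Sym.zero (n : ℕ) {w : (Fin 3 → ℝ) → ℝ} : Sym n w (fun _ => 0) := by
  induction n with
  | zero => exact ⟨0, le_rfl, fun x _ => by simp⟩
  | succ n ih =>
    refine ⟨⟨0, le_rfl, fun x _ => by simp⟩, fun _ _ => 0, fun m x _ => ?_, fun m => ih⟩
    simpa using hasDerivAt_const (x m) (0 : ℝ)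

lemma Sym.inv {n w f} (hf : Sym n w f) (c : ℝ) (hc : 0 < c) (hw : ∀ x ∈ Om, 0 < w x)
    (hl : ∀ x ∈ Om, c * w x ≤ f x) : Sym n (fun x => (w x)⁻¹) (fun x => (f x)⁻¹) := by
  have pos : ∀ x ∈ Om, 0 < f x := fun x hx => (mul_pos hc (hw x hx)).trans_le (hl x hx)
  have key : ∃ C : ℝ, 0 ≤ C ∧ ∀ x ∈ Om, |(f x)⁻¹| ≤ C * (w x)⁻¹ := by
    refine ⟨c⁻¹, by positivity, fun x hx => ?_⟩
    rw [abs_of_pos (inv_pos.2 (pos x hx)), ← mul_inv]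
    exact inv_anti₀ (mul_pos hc (hw x hx)) (hl x hx)
  induction n with
  | zero => exact key
  | succ n ih =>
    have hi := ih hf.down
    obtain ⟨-, f', hf', hs⟩ := hf
    refine ⟨key, fun m x => (-1) * (f' m x * ((f x)⁻¹ * (f x)⁻¹)), fun m x hx => ?_, fun m =>
      Sym.cmul _ (((hs m).mul (hi.mul hi)).mono 1 zero_le_one fun x hx => ?_)⟩
    · have h0 : f (Function.update x m (x m)) ≠ 0 := by simpa using (pos x hx).ne'
      have := (hf' m x hx).fun_inv h0
      simp only [Function.update_eq_self] at this
      refine this.congr_deriv ?_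
      have := (rho_pos hx m).ne'
      have := (pos x hx).ne'
      field_simp
    · have := (hw x hx).ne'
      apply le_of_eq
      field_simp

lemma Sym.arctan {n w f} (hf : Sym n w f) (hw : ∀ x ∈ Om, w x ≤ 1) (hw0 : ∀ x ∈ Om, 0 ≤ w x) :
    Sym n w (fun x => Real.arctan (f x)) := by
  have habs : ∀ y : ℝ, |Real.arctan y| ≤ |y| := by
    have hp : ∀ y : ℝ, 0 ≤ y → Real.arctan y ≤ y := by
      intro y hy
      have h1 := Real.arctan_nonneg.2 hy
      have := Real.le_tan h1 (Real.arctan_lt_pi_div_two y)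
      rwa [Real.tan_arctan] at this
    intro y
    rcases le_total 0 y with h | h
    · rw [abs_of_nonneg h, abs_of_nonneg (Real.arctan_nonneg.2 h)]
      exact hp y h
    · have := hp (-y) (by linarith)
      rw [Real.arctan_neg] at this
      rw [abs_of_nonpos h, abs_of_nonpos]
      · exact this
      · have := Real.arctan_nonneg.2 (neg_nonneg.2 h)
        rw [Real.arctan_neg] at this
        linarith
  have key : ∃ C : ℝ, 0 ≤ C ∧ ∀ x ∈ Om, |Real.arctan (f x)| ≤ C * w x := by
    obtain ⟨C, hC, h⟩ := hf.bd
    exact ⟨C, hC, fun x hx => (habs _).trans (h x hx)⟩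
  cases n with
  | zero => exact key
  | succ n =>
    have h1 : Sym n (fun _ => 1) (fun x => 1 + f x * f x) := by
      refine (Sym.const n 1).add ((hf.down.mul hf.down).mono 1 zero_le_one fun x hx => ?_)
      nlinarith [hw x hx, hw0 x hx]
    have h2 := h1.inv 1 one_pos (fun _ _ => one_pos) (fun x _ => by nlinarith [mul_self_nonneg (f x)])
    obtain ⟨-, f', hf', hs⟩ := hf
    refine ⟨key, fun m x => f' m x * (1 + f x * f x)⁻¹, fun m x hx => ?_, fun m =>
      ((hs m).mul h2).mono 1 zero_le_one fun x hx => by simp⟩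
    have := (hf' m x hx).arctan
    simp only [Function.update_eq_self] at this
    convert this using 1
    have := (rho_pos hx m).ne'
    field_simp

lemma Sym.rho (n : ℕ) (m : Fin 3) : Sym n (rho m) (rho m) := by
  have key : ∃ C : ℝ, 0 ≤ C ∧ ∀ x ∈ Om, |PsiBound.rho m x| ≤ C * PsiBound.rho m x :=
    ⟨1, zero_le_one, fun x hx => by rw [abs_of_pos (rho_pos hx m), one_mul]⟩
  induction n with
  | zero => exact key
  | succ n ih =>
    refine ⟨key, fun l x => (if l = m then (if m = 2 then -1 else 1) else 0) * PsiBound.rho m x,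
      fun l x hx => ?_, fun l => Sym.cmul _ ih⟩
    have hp := (rho_pos hx l).ne'
    by_cases h : l = m
    · subst h
      simp only [if_true]
      rw [mul_div_assoc, div_self hp, mul_one]
      fin_cases l
      · simpa [PsiBound.rho] using hasDerivAt_id' (x 0)
      · simpa [PsiBound.rho] using hasDerivAt_id' (x 1)
      · simpa [PsiBound.rho] using (hasDerivAt_id (x 2)).const_sub (π / 2)
    · have : (fun y => PsiBound.rho m (Function.update x l y)) = fun _ => PsiBound.rho m x := by
        funext y
        fin_cases l <;> fin_cases m <;> simp [PsiBound.rho, Function.update] at h ⊢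
      rw [this]
      simpa [h] using hasDerivAt_const (x l) (PsiBound.rho m x)

lemma rho_two_le {x : Fin 3 → ℝ} (hx : x ∈ Om) : rho 2 x ≤ 2 := by
  obtain ⟨h0, h1, h2, h3, h4⟩ := hx
  simp [rho]
  linarith [Real.pi_lt_four]

lemma Sym.sincos (n : ℕ) : Sym n (fun _ => 1) (fun x => Real.sin (x 2)) ∧
    Sym n (fun _ => 1) (fun x => Real.cos (x 2)) := by
  have k1 : ∃ C : ℝ, 0 ≤ C ∧ ∀ x ∈ Om, |Real.sin (x 2)| ≤ C * 1 :=
    ⟨1, zero_le_one, fun x _ => by simpa using Real.abs_sin_le_one _⟩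
  have k2 : ∃ C : ℝ, 0 ≤ C ∧ ∀ x ∈ Om, |Real.cos (x 2)| ≤ C * 1 :=
    ⟨1, zero_le_one, fun x _ => by simpa using Real.abs_cos_le_one _⟩
  induction n with
  | zero => exact ⟨k1, k2⟩
  | succ n ih =>
    have r : Sym n (fun _ => 1) (PsiBound.rho 2) := (Sym.rho n 2).mono 2 (by norm_num)
      fun x hx => by simpa using rho_two_le hx
    refine ⟨⟨k1, fun l x => (if l = 2 then 1 else 0) * (PsiBound.rho 2 x * Real.cos (x 2)),
      fun l x hx => ?_, fun l => Sym.cmul _ ((r.mul ih.2).mono 1 zero_le_one (by simp))⟩,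
      ⟨k2, fun l x => (if l = 2 then -1 else 0) * (PsiBound.rho 2 x * Real.sin (x 2)),
      fun l x hx => ?_, fun l => Sym.cmul _ ((r.mul ih.1).mono 1 zero_le_one (by simp))⟩⟩
    · have hp := (rho_pos hx l).ne'
      by_cases h : l = 2
      · subst h
        simpa [hp] using Real.hasDerivAt_sin (x 2)
      · simpa [h, Function.update_of_ne (Ne.symm h)] using hasDerivAt_const (x l) (Real.sin (x 2))
    · have hp := (rho_pos hx l).ne'
      by_cases h : l = 2
      · subst h
        simpa [hp, neg_div] using Real.hasDerivAt_cos (x 2)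
      · simpa [h, Function.update_of_ne (Ne.symm h)] using hasDerivAt_const (x l) (Real.cos (x 2))

lemma Sym.cos' (n : ℕ) : Sym n (PsiBound.rho 2) (fun x => Real.cos (x 2)) := by
  have key : ∃ C : ℝ, 0 ≤ C ∧ ∀ x ∈ Om, |Real.cos (x 2)| ≤ C * PsiBound.rho 2 x := by
    refine ⟨1, zero_le_one, fun x hx => ?_⟩
    rw [← Real.sin_pi_div_two_sub, one_mul]
    have := rho_pos hx 2
    have h2 : PsiBound.rho 2 x = π / 2 - x 2 := by simp [PsiBound.rho]
    rw [h2] at this ⊢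
    exact Real.abs_sin_le_abs.trans (abs_of_pos this).le
  cases n with
  | zero => exact key
  | succ n =>
    refine ⟨key, fun l x => (if l = 2 then -1 else 0) * (PsiBound.rho 2 x * Real.sin (x 2)),
      fun l x hx => ?_, fun l => Sym.cmul _
        (((Sym.rho n 2).mul (Sym.sincos n).1).mono 1 zero_le_one (by simp))⟩
    have hp := (rho_pos hx l).ne'
    by_cases h : l = 2
    · subst h
      simpa [hp, neg_div] using Real.hasDerivAt_cos (x 2)
    · simpa [h, Function.update_of_ne (Ne.symm h)] using hasDerivAt_const (x l) (Real.cos (x 2))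

lemma Sym.iter {n k w} {f F : (Fin 3 → ℝ) → ℝ} (m : Fin 3) (hf : Sym (n + k) w f)
    (hF : ∀ x ∈ Om, F x = f x) :
    ∃ g, Sym n (fun x => w x * (PsiBound.rho m x)⁻¹ ^ k) g ∧
      ∀ x ∈ Om, iteratedDeriv k (fun y => F (Function.update x m y)) (x m) = g x := by
  induction k generalizing n with
  | zero => exact ⟨f, by simpa using hf, fun x hx => by simpa using hF x hx⟩
  | succ k ih =>
    obtain ⟨g, ⟨-, g', hg', hs⟩, hg⟩ := ih (n := n + 1) (by convert hf using 1; omega)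
    refine ⟨fun x => g' m x * (PsiBound.rho m x)⁻¹, ?_, fun x hx => ?_⟩
    · have hr : Sym n _ _ := (Sym.rho n m).inv 1 one_pos (fun x hx => rho_pos hx m) (by simp)
      refine ((hs m).mul hr).mono 1 zero_le_one fun x hx => ?_
      rw [one_mul, pow_succ, mul_assoc]
    · show _ = g' m x * (PsiBound.rho m x)⁻¹
      rw [iteratedDeriv_succ, ← div_eq_mul_inv, ← (hg' m x hx).deriv]
      apply Filter.EventuallyEq.deriv_eq
      filter_upwards [ev_Om hx m] with y hy
      have := hg _ hy
      simpa using this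

/-- numerator -/
noncomputable def NN (x : Fin 3 → ℝ) : ℝ :=
  x 1 ^ 2 * (Real.cos (x 2) ^ 2 + (x 0)⁻¹ ^ 4 * Real.sin (x 2) ^ 2) -
    (x 1)⁻¹ ^ 2 * ((x 0)⁻¹ ^ 4 * Real.cos (x 2) ^ 2 + Real.sin (x 2) ^ 2)

/-- denominator -/
noncomputable def DD (x : Fin 3 → ℝ) : ℝ :=
  2 * (1 - (x 0)⁻¹ ^ 4) * Real.sin (x 2) * Real.cos (x 2)

/-- weight of the numerator -/
noncomputable def wN (x : Fin 3 → ℝ) : ℝ :=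
  x 1 ^ 2 * ((π / 2 - x 2) ^ 2 + (x 0)⁻¹ ^ 4)

lemma wN_pos {x} (hx : x ∈ Om) : 0 < wN x := by
  obtain ⟨h0, h1, h2, h3, h4⟩ := hx
  have : 0 < π / 2 - x 2 := by linarith
  unfold wN
  positivity

lemma inv_sq_le {x : Fin 3 → ℝ} (hx : x ∈ Om) :
    (x 1)⁻¹ ^ 2 ≤ (1 / 16) * (x 1 ^ 2 * (π / 2 - x 2) ^ 2) := by
  obtain ⟨h0, h1, h2, h3, h4⟩ := hx
  have hb : 0 < x 1 ^ 2 := by positivity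
  rw [inv_pow, inv_le_iff_one_le_mul₀ hb]
  nlinarith

lemma s_bd {x : Fin 3 → ℝ} (hx : x ∈ Om) : 0 < (x 0)⁻¹ ^ 4 ∧ (x 0)⁻¹ ^ 4 < 1 := by
  obtain ⟨h0, h1, h2, h3, h4⟩ := hx
  exact ⟨by positivity, pow_lt_one₀ (by positivity) (inv_lt_one_of_one_lt₀ h0) (by norm_num)⟩

lemma NN_lower {x} (hx : x ∈ Om) : (1 / 10) * wN x ≤ NN x := by
  have hi := inv_sq_le hx
  obtain ⟨hs0, hs1⟩ := s_bd hx
  obtain ⟨h0, h1, h2, h3, h4⟩ := hx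
  have hd : 0 < π / 2 - x 2 := by linarith
  have hcos : 2 / π * (π / 2 - x 2) ≤ Real.cos (x 2) := by
    rw [← Real.sin_pi_div_two_sub]
    exact Real.mul_le_sin hd.le (by linarith)
  have hpi : (6 / 10 : ℝ) ≤ 2 / π := by
    rw [le_div_iff₀ Real.pi_pos]; linarith [Real.pi_lt_d2]
  unfold NN wN
  set s := (x 0)⁻¹ ^ 4
  set d := π / 2 - x 2
  set c := Real.cos (x 2)
  set v := Real.sin (x 2)
  have hcv : v ^ 2 + c ^ 2 = 1 := Real.sin_sq_add_cos_sq _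
  have hc : (6 / 10) * d ≤ c := (mul_le_mul_of_nonneg_right hpi hd.le).trans hcos
  have hc2 : (36 / 100) * d ^ 2 ≤ c ^ 2 := by nlinarith
  have e1 : (18 / 100) * (d ^ 2 + s) ≤ c ^ 2 + s * v ^ 2 := by
    have : s * v ^ 2 = s - s * c ^ 2 := by linear_combination s * hcv
    nlinarith [mul_nonneg (sub_nonneg.2 hs1.le) (sq_nonneg c), mul_nonneg hs0.le (sq_nonneg v)]
  have e2 : s * c ^ 2 + v ^ 2 ≤ 1 := by nlinarith [sq_nonneg c]
  have e3 : (x 1)⁻¹ ^ 2 * (s * c ^ 2 + v ^ 2) ≤ (x 1)⁻¹ ^ 2 :=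
    mul_le_of_le_one_right (by positivity) e2
  have e4 := mul_le_mul_of_nonneg_left e1 (sq_nonneg (x 1))
  have e5 : 0 ≤ x 1 ^ 2 * s := by positivity
  have e6 : 0 ≤ x 1 ^ 2 * d ^ 2 := by positivity
  nlinarith

lemma Sym.coordB (n : ℕ) : Sym n (fun x => x 1) (fun x => x 1) := Sym.rho n 1
lemma Sym.coordA (n : ℕ) : Sym n (fun x => x 0) (fun x => x 0) := Sym.rho n 0

lemma Sym.sq {n w f} (hf : Sym n w f) : Sym n (fun x => w x ^ 2) (fun x => f x ^ 2) := by
  simpa only [pow_two] using hf.mul hf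

lemma Sym.s (n : ℕ) : Sym n (fun x => (x 0)⁻¹ ^ 4) (fun x => (x 0)⁻¹ ^ 4) := by
  have h : Sym n _ _ := (Sym.coordA n).inv 1 one_pos (fun x hx => by have := hx.1; linarith)
    (fun x _ => by simp)
  have := h.sq.sq
  simpa only [← pow_mul] using this

lemma Sym.NN (n : ℕ) : Sym n wN NN := by
  obtain ⟨hsin, hcos⟩ := Sym.sincos n
  have hcos' := Sym.cos' n
  have hs := Sym.s n
  have hs1 : Sym n (fun _ => 1) (fun x => (x 0)⁻¹ ^ 4) :=
    hs.mono 1 zero_le_one fun x hx => by linarith [(s_bd hx).2]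
  have hb2 := (Sym.coordB n).sq
  have hbi : Sym n _ _ := hb2.inv 1 one_pos (fun x hx => by have := hx.2.1; positivity)
    (fun x _ => by simp)
  have t1 : Sym n (fun x => (π / 2 - x 2) ^ 2 + (x 0)⁻¹ ^ 4)
      (fun x => Real.cos (x 2) ^ 2 + (x 0)⁻¹ ^ 4 * Real.sin (x 2) ^ 2) := by
    refine (hcos'.sq.mono 1 zero_le_one fun x hx => ?_).add
      ((hs.mul hsin.sq).mono 1 zero_le_one fun x hx => ?_)
    · have := (s_bd hx).1
      simp [PsiBound.rho] at this ⊢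
      linarith
    · have := sq_nonneg (π / 2 - x 2)
      simp at this ⊢
      linarith
  have t2 : Sym n (fun _ => 1)
      (fun x => (x 0)⁻¹ ^ 4 * Real.cos (x 2) ^ 2 + Real.sin (x 2) ^ 2) :=
    ((hs1.mul hcos.sq).mono 1 zero_le_one (by simp)).add (hsin.sq.mono 1 zero_le_one (by simp))
  have u1 : Sym n wN _ := hb2.mul t1
  have u2 : Sym n wN _ := ((hbi.mul t2).mono (1 / 16) (by norm_num) fun x hx => by
    have := inv_sq_le hx
    have h2 : 0 ≤ x 1 ^ 2 * (x 0)⁻¹ ^ 4 := mul_nonneg (sq_nonneg _) (s_bd hx).1.le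
    unfold wN
    rw [inv_pow] at this
    nlinarith).cmul (-1)
  have := u1.add u2
  convert this using 2 with x
  unfold PsiBound.NN
  rw [inv_pow]
  ring

lemma Sym.DD (n : ℕ) : Sym n (fun x => π / 2 - x 2) DD := by
  obtain ⟨hsin, hcos⟩ := Sym.sincos n
  have hcos' := Sym.cos' n
  have hs1 : Sym n (fun _ => 1) (fun x => (x 0)⁻¹ ^ 4) :=
    (Sym.s n).mono 1 zero_le_one fun x hx => by linarith [(s_bd hx).2]
  have := ((((Sym.const n 1).add (hs1.cmul (-1))).cmul 2).mul hsin).mul hcos'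
  refine cast (congrArg₂ (Sym n) ?_ ?_) this
  · funext x
    simp [PsiBound.rho]
  · funext x
    unfold PsiBound.DD
    ring

/-- weight of psi -/
noncomputable def wP (x : Fin 3 → ℝ) : ℝ := (x 1 ^ 2)⁻¹ * (π / 2 - x 2)⁻¹

lemma Sym.quot (n : ℕ) : Sym n wP (fun x => PsiBound.DD x * (PsiBound.NN x)⁻¹) := by
  refine ((Sym.DD n).mul ((Sym.NN n).inv (1 / 10) (by norm_num) (fun x hx => wN_pos hx)
    (fun x hx => NN_lower hx))).mono 1 zero_le_one fun x hx => ?_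
  have hw := wN_pos hx
  have hs := (s_bd hx).1
  obtain ⟨h0, h1, h2, h3, h4⟩ := hx
  have hd : 0 < π / 2 - x 2 := by linarith
  have hb : 0 < x 1 ^ 2 := by positivity
  unfold wP
  rw [one_mul, ← mul_inv, ← div_eq_mul_inv, div_le_iff₀ hw, ← div_eq_inv_mul,
    le_div_iff₀ (by positivity)]
  unfold wN
  nlinarith [mul_pos hb hs]

lemma Sym.psi (n : ℕ) :
    Sym n wP (fun x => -(1 / 2) * Real.arctan (PsiBound.DD x * (PsiBound.NN x)⁻¹)) := by
  refine ((Sym.quot n).arctan (fun x hx => ?_) (fun x hx => ?_)).cmul _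
  all_goals
    obtain ⟨h0, h1, h2, h3, h4⟩ := hx
    have hd : 0 < π / 2 - x 2 := by linarith
    unfold wP
  · rw [← mul_inv]
    exact inv_le_one_of_one_le₀ (by linarith)
  · positivity

lemma psi_eq {x : Fin 3 → ℝ} (hx : x ∈ Om) :
    psiS (x 0) (x 1) (x 2) = -(1 / 2) * Real.arctan (DD x * (NN x)⁻¹) := by
  have hN : 0 < NN x := (mul_pos (by norm_num) (wN_pos hx)).trans_le (NN_lower hx)
  have hs := s_bd hx
  obtain ⟨h0, h1, h2, h3, h4⟩ := hx
  have hc : 0 < Real.cos (x 2) := Real.cos_pos_of_mem_Ioo ⟨by linarith, h3⟩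
  have hv : 0 < Real.sin (x 2) := Real.sin_pos_of_pos_of_lt_pi h2 (by linarith)
  have hD : 0 < DD x := by
    unfold DD
    have : 0 < 1 - (x 0)⁻¹ ^ 4 := by linarith [hs.2]
    positivity
  have hX : aCoef' (x 0) (x 1) * Real.cot (x 2) - bCoef' (x 0) (x 1) * Real.tan (x 2)
      = (DD x * (NN x)⁻¹)⁻¹ := by
    rw [mul_inv, inv_inv, ← div_eq_inv_mul]
    unfold aCoef' bCoef' NN DD
    rw [Real.cot_eq_cos_div_sin, Real.tan_eq_sin_div_cos]
    have ha : x 0 ≠ 0 := by positivity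
    have hb : x 1 ≠ 0 := by positivity
    have e : x 0 ^ 2 - (x 0)⁻¹ ^ 2 = x 0 ^ 2 * (1 - (x 0)⁻¹ ^ 4) := by
      field_simp
    rw [e]
    have h1s : 1 - (x 0)⁻¹ ^ 4 ≠ 0 := by linarith [hs.2]
    generalize hS : 1 - (x 0)⁻¹ ^ 4 = S at h1s
    have hcc := hc.ne'
    have hvv := hv.ne'
    field_simp
    ring
  unfold psiS
  rw [hX, Real.arctan_inv_of_pos (by positivity)]
  ring

end PsiBound

open PsiBound in
theorem psi_partial_derivative_bounds (i j k : ℕ) (hijk : 1 ≤ i + j + k) :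
    ∃ C : ℝ, 0 < C ∧ ∃ ε : ℝ, 0 < ε ∧ ε < 1 ∧
      ∀ lA lB θ : ℝ, 1 < lA → 1 < lB → 0 < θ → θ < π / 2 →
        (π / 2 - θ)⁻¹ ≤ ε * lB ^ 2 →
        |iteratedDeriv i
            (fun θ' => iteratedDeriv j
              (fun a => iteratedDeriv k (fun b => psiS a b θ') lB) lA) θ| ≤
          C * (π / 2 - θ) ^ (-(i : ℤ) - 1) * lA ^ (-(j : ℤ)) * lB ^ (-2 - (k : ℤ)) := by
  obtain ⟨g1, hg1, e1⟩ := Sym.iter (n := 0 + i + j) (k := k)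
    (F := fun x => psiS (x 0) (x 1) (x 2)) 1 (Sym.psi _) (fun x hx => psi_eq hx)
  obtain ⟨g2, hg2, e2⟩ := Sym.iter (n := 0 + i) (k := j) 0 hg1 e1
  obtain ⟨g3, hg3, e3⟩ := Sym.iter (n := 0) (k := i) 2 hg2 e2
  obtain ⟨C, hC, hb⟩ := hg3
  refine ⟨C + 1, by positivity, 1 / 8, by norm_num, by norm_num, ?_⟩
  intro lA lB θ hA hB h0 h1 hε
  have hd : 0 < π / 2 - θ := by linarith
  have hx : ![lA, lB, θ] ∈ Om := by
    refine ⟨hA, hB, h0, h1, ?_⟩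
    rw [inv_le_iff_one_le_mul₀ hd] at hε
    simp
    linarith
  have h3 := e3 _ hx
  have hb3 := hb _ hx
  rw [← h3] at hb3
  have hlhs : iteratedDeriv i
            (fun θ' => iteratedDeriv j
              (fun a => iteratedDeriv k (fun b => psiS a b θ') lB) lA) θ =
      iteratedDeriv i (fun y => iteratedDeriv j (fun y_1 =>
        iteratedDeriv k (fun y_2 => psiS
          (Function.update (Function.update (Function.update ![lA, lB, θ] 2 y) 0 y_1) 1 y_2 0)
          (Function.update (Function.update (Function.update ![lA, lB, θ] 2 y) 0 y_1) 1 y_2 1)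
          (Function.update (Function.update (Function.update ![lA, lB, θ] 2 y) 0 y_1) 1 y_2 2))
          (Function.update (Function.update ![lA, lB, θ] 2 y) 0 y_1 1))
          (Function.update ![lA, lB, θ] 2 y 0)) (![lA, lB, θ] 2) := by
    simp [Function.update]
  rw [hlhs]
  refine hb3.trans ?_
  beta_reduce
  have hA0 : 0 < lA := by linarith
  have hB0 : 0 < lB := by linarith
  have hw : wP ![lA, lB, θ] * (PsiBound.rho 1 ![lA, lB, θ])⁻¹ ^ k
      * (PsiBound.rho 0 ![lA, lB, θ])⁻¹ ^ j * (PsiBound.rho 2 ![lA, lB, θ])⁻¹ ^ i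
      = (π / 2 - θ) ^ (-(i : ℤ) - 1) * lA ^ (-(j : ℤ)) * lB ^ (-2 - (k : ℤ)) := by
    rw [zpow_sub₀ hd.ne', zpow_sub₀ hB0.ne']
    simp [wP, PsiBound.rho, zpow_neg]
    norm_cast
    field_simp
  rw [hw]
  have hpos : 0 < (π / 2 - θ) ^ (-(i : ℤ) - 1) * lA ^ (-(j : ℤ)) * lB ^ (-2 - (k : ℤ)) := by
    positivity
  have := mul_le_mul_of_nonneg_right (show C ≤ C + 1 by linarith) hpos.le
  refine this.trans (le_of_eq ?_)
  ring
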